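/- (Property 1, monotonicity in β) Fix l ∈ {1,…,K} and view the closed-form relaxed-subregion powers as functions of the gradient SMCV β, with h_1,…,h_K, P_1,…,P_K, α, N fixed. Then for every k > l, the map β ↦ p̃*_{l,k}(β) is strictly decreasing on (0, ∞). -/

import Mathlib

/-!
Write `S = Σ_{i ≤ l} C_i`, `Q = Σ_{i ≤ l} C_i²`, `M = K - l` and `s = √η̃*_l`. Since
`Σ_{i ≤ l} G_i(P_i, s²) = S / s`, the free-coordinate power at `η = s²` is
`(((β + K) s - S) / (β + M))² α / h_k²`. The formula for `s` gives
`(β + K) s = S + (β + M) (Q / S + N / (α S) (1 + 1 / β))`, so both the term `S` and the factor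
`β + M` cancel, leaving
`p̃*_{l,k} = (Q / S + N / (α S) (1 + 1 / β))² α / h_k²` (`pTildeStar_eq`).
The base of the square is positive and strictly decreasing in `β`.
-/

open Finset

noncomputable section

/-- Aggregation level `G_k(p, η) = √(p/(η·α))·h_k`. -/
def aggLevel (α h p η : ℝ) : ℝ := Real.sqrt (p / (η * α)) * h

/-- Aggregation capability `C_k = √(P_k/α)·h_k`. -/
def aggCap (α h P : ℝ) : ℝ := Real.sqrt (P / α) * h

/-- Aggregation MSE `F(p, η)`. -/
def mse (K : ℕ) (α β N : ℝ) (h p : Fin K → ℝ) (η : ℝ) : ℝ :=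
  β * α / (β + 1) * ∑ k, (aggLevel α (h k) (p k) η - 1) ^ 2
    + α / (β + 1) * ((∑ k, aggLevel α (h k) (p k) η) - (K : ℝ)) ^ 2
    + N / η

/-- Feasibility for Problem P1: `0 ≤ p_k ≤ P_k` and `η > 0`. -/
def feasible (K : ℕ) (P p : Fin K → ℝ) (η : ℝ) : Prop :=
  (∀ k, 0 ≤ p k ∧ p k ≤ P k) ∧ 0 < η

/-- Global minimizer of Problem P1. -/
def isGlobalMin (K : ℕ) (α β N : ℝ) (h P p : Fin K → ℝ) (η : ℝ) : Prop :=
  feasible K P p η ∧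
    ∀ q η', feasible K P q η' → mse K α β N h p η ≤ mse K α β N h q η'

/-- The subregion `M_l` (1-based `l`; `k ≤ l` means `(k:ℕ) < l` for `k : Fin K`). -/
def inSubregion (K : ℕ) (P : Fin K → ℝ) (l : ℕ) (p : Fin K → ℝ) : Prop :=
  (∀ k : Fin K, (k : ℕ) < l → p k = P k) ∧
    ∀ k : Fin K, l ≤ (k : ℕ) → 0 ≤ p k ∧ p k < P k

/-- The relaxed subregion `M̃_l`. -/
def inRelaxed (K : ℕ) (P : Fin K → ℝ) (l : ℕ) (p : Fin K → ℝ) : Prop :=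
  (∀ k : Fin K, (k : ℕ) < l → p k = P k) ∧
    ∀ k : Fin K, l ≤ (k : ℕ) → 0 ≤ p k

/-- `Σ_{i=1}^l C_i`. -/
def capSum (K : ℕ) (α : ℝ) (h P : Fin K → ℝ) (l : ℕ) : ℝ :=
  ∑ i ∈ univ.filter fun i : Fin K => (i : ℕ) < l, aggCap α (h i) (P i)

/-- `Σ_{i=1}^l C_i²`. -/
def capSqSum (K : ℕ) (α : ℝ) (h P : Fin K → ℝ) (l : ℕ) : ℝ :=
  ∑ i ∈ univ.filter fun i : Fin K => (i : ℕ) < l, aggCap α (h i) (P i) ^ 2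

/-- `Σ_{i=1}^l G_i(P_i, η)`. -/
def levelSum (K : ℕ) (α : ℝ) (h P : Fin K → ℝ) (l : ℕ) (η : ℝ) : ℝ :=
  ∑ i ∈ univ.filter fun i : Fin K => (i : ℕ) < l, aggLevel α (h i) (P i) η

/-- The closed-form optimal denoising factor `η̃*_l` of Eq. (18). -/
def etaStar (K : ℕ) (α β N : ℝ) (h P : Fin K → ℝ) (l : ℕ) : ℝ :=
  ((β * α / (β + 1) * capSqSum K α h P l
      + β * α / ((β + (K : ℝ) - (l : ℝ)) * (β + 1)) * capSum K α h P l ^ 2 + N)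
    / (β * (β + (K : ℝ)) * α / ((β + (K : ℝ) - (l : ℝ)) * (β + 1)) * capSum K α h P l)) ^ 2

/-- The free-coordinate powers `p̃_{l,k}(η)` of Eq. (16). -/
def pTildeAt (K : ℕ) (α β : ℝ) (h P : Fin K → ℝ) (l : ℕ) (η : ℝ) (k : Fin K) : ℝ :=
  ((β + (K : ℝ) - levelSum K α h P l η) / (β + (K : ℝ) - (l : ℝ))) ^ 2 * α * η / h k ^ 2

/-- The optimal power vector over the relaxed subregion `M̃_l` at a given `η`. -/
def pRelaxOpt (K : ℕ) (α β : ℝ) (h P : Fin K → ℝ) (l : ℕ) (η : ℝ) : Fin K → ℝ :=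
  fun k => if (k : ℕ) < l then P k else pTildeAt K α β h P l η k

/-- The closed-form candidate power vector `p̃*_l`. -/
def pTildeStar (K : ℕ) (α β N : ℝ) (h P : Fin K → ℝ) (l : ℕ) : Fin K → ℝ :=
  pRelaxOpt K α β h P l (etaStar K α β N h P l)

end

lemma aggLevel_sq (α h p s : ℝ) (hs : 0 < s) :
    aggLevel α h p (s ^ 2) = aggCap α h p / s := by
  unfold aggLevel aggCap
  have e : p / (s ^ 2 * α) = p / α / s ^ 2 := by rw [div_div, mul_comm]
  rw [e, Real.sqrt_div' _ (sq_nonneg s), Real.sqrt_sq hs.le]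
  ring

lemma levelSum_sq (K : ℕ) (α : ℝ) (h P : Fin K → ℝ) (l : ℕ) (s : ℝ) (hs : 0 < s) :
    levelSum K α h P l (s ^ 2) = capSum K α h P l / s := by
  unfold levelSum capSum
  rw [Finset.sum_div]
  exact Finset.sum_congr rfl fun i _ => aggLevel_sq _ _ _ _ hs

lemma capSum_pos (K : ℕ) (h P : Fin K → ℝ) (hh : ∀ k, 0 < h k) (hP : ∀ k, 0 < P k)
    (α : ℝ) (hα : 0 < α) (hK : 0 < K) (l : ℕ) (hl1 : 1 ≤ l) : 0 < capSum K α h P l := by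
  refine Finset.sum_pos (fun i _ => ?_) ⟨⟨0, hK⟩, by simp; omega⟩
  exact mul_pos (Real.sqrt_pos.2 (div_pos (hP i) hα)) (hh i)

lemma capSqSum_nonneg (K : ℕ) (α : ℝ) (h P : Fin K → ℝ) (l : ℕ) :
    0 ≤ capSqSum K α h P l :=
  Finset.sum_nonneg fun _ _ => sq_nonneg _

/-- In the closed-form powers the dependence on `β` reduces to the single term `1 / β`. -/
lemma pTildeStar_eq (K : ℕ) (α β N : ℝ) (h P : Fin K → ℝ) (hα : 0 < α) (hβ : 0 < β) (hN : 0 < N)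
    (l : ℕ) (hS : 0 < capSum K α h P l) (k : Fin K) (hk : l ≤ (k : ℕ)) :
    pTildeStar K α β N h P l k =
      (capSqSum K α h P l / capSum K α h P l
        + N / (α * capSum K α h P l) * (1 + 1 / β)) ^ 2 * α / h k ^ 2 := by
  have hQ := capSqSum_nonneg K α h P l
  have hlK : (l : ℝ) ≤ K := by exact_mod_cast hk.trans k.isLt.le
  have hD : 0 < β + (K : ℝ) - l := by linarith
  have hB : 0 < β + (K : ℝ) := by positivity
  simp only [pTildeStar, pRelaxOpt, if_neg hk.not_gt, pTildeAt, etaStar]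
  set S := capSum K α h P l with hSdef
  set Q := capSqSum K α h P l
  set D := β + (K : ℝ) - l
  set B := β + (K : ℝ)
  set s := (β * α / (β + 1) * Q + β * α / (D * (β + 1)) * S ^ 2 + N)
    / (β * B * α / (D * (β + 1)) * S) with hsdef
  have hs : 0 < s := by positivity
  have key : B * s = S + D * (Q / S + N / (α * S) * (1 + 1 / β)) := by
    rw [hsdef]
    field_simp
    ring
  rw [levelSum_sq K α h P l s hs, ← hSdef]
  have e : (B - S / s) / D * s = Q / S + N / (α * S) * (1 + 1 / β) := by
    rw [div_mul_eq_mul_div, sub_mul, div_mul_cancel₀ _ hs.ne', key, add_sub_cancel_left,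
      mul_div_cancel_left₀ _ hD.ne']
  rw [← e]
  ring

/-- **Property 1 (monotonicity in β).** Fix `l ∈ {1,…,K}` and view the
closed-form relaxed-subregion powers as functions of the gradient SMCV `β`
(with `h`, `P`, `α`, `N` fixed).  Then for every `k > l`, the map
`β ↦ p̃*_{l,k}(β)` is strictly decreasing on `(0, ∞)`. -/
theorem property1_beta_strict_anti
    (K : ℕ) (hK : 0 < K) (h P : Fin K → ℝ)
    (hh : ∀ k, 0 < h k) (hP : ∀ k, 0 < P k)
    (α N : ℝ) (hα : 0 < α) (hN : 0 < N)
    (l : ℕ) (hl1 : 1 ≤ l) (hlK : l ≤ K) :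
    ∀ k : Fin K, l ≤ (k : ℕ) →
      StrictAntiOn (fun β : ℝ => pTildeStar K α β N h P l k) (Set.Ioi 0) := by
  intro k hk a ha b hb hab
  rw [Set.mem_Ioi] at ha hb
  have hS := capSum_pos K h P hh hP α hα hK l hl1
  have hQ := capSqSum_nonneg K α h P l
  have hk0 := hh k
  simp only [pTildeStar_eq K α _ N h P hα ha hN l hS k hk,
    pTildeStar_eq K α _ N h P hα hb hN l hS k hk]
  have hinv : 1 / b < 1 / a := one_div_lt_one_div_of_lt ha hab
  gcongr
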